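/- Interpolating classical-quantum entropy chain: Let ρ₁₂ be a density matrix on H₁⊗H₂, let P^1,…,P^M be positive semidefinite operators on H₁ with ∑_α P^α = id_{H₁}, and let Q^1,…,Q^N be positive semidefinite operators on H₂ with ∑_β Q^β = id_{H₂}. Define S^{cl,Q}[ρ₁₂] = ∑_α S[ Tr₁[(P^α⊗id₂) ρ₁₂] ], S^cl[ρ₁₂] = ∑_{α,β} φ( Tr[(P^α⊗Q^β) ρ₁₂] ), S^cl[ρ₁] = ∑_α φ( Tr[P^α ρ₁] ), and S^cl[ρ₂] = ∑_β φ( Tr[Q^β ρ₂] ), where φ(x) = −x ln x (with φ(0)=0). Then S[ρ₁₂] − S[ρ₁] − S[ρ₂] ≤ S^{cl,Q}[ρ₁₂] − S^cl[ρ₁] − S[ρ₂] ≤ S^cl[ρ₁₂] − S^cl[ρ₁] − S^cl[ρ₂]. -/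

import Mathlib

open Matrix Kronecker Real
open scoped ComplexOrder

/-- Von Neumann entropy of a (Hermitian) matrix: the sum of `-λ ln λ` over its
eigenvalues, with the convention `0 ln 0 = 0`. -/
noncomputable def entropy {n : Type*} [Fintype n] [DecidableEq n]
    (A : Matrix n n ℂ) : ℝ :=
  if h : A.IsHermitian then ∑ i, Real.negMulLog (h.eigenvalues i) else 0

/-- Partial trace over the first factor of a twofold tensor product. -/
noncomputable def ptraceFst {m k : Type*} [Fintype m]
    (ρ : Matrix (m × k) (m × k) ℂ) : Matrix k k ℂ :=
  Matrix.of fun i j => ∑ a : m, ρ (a, i) (a, j)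

/-- Partial trace over the second factor of a twofold tensor product. -/
noncomputable def ptraceSnd {m k : Type*} [Fintype k]
    (ρ : Matrix (m × k) (m × k) ℂ) : Matrix m m ℂ :=
  Matrix.of fun i j => ∑ a : k, ρ (i, a) (j, a)

/-- Partial trace over the first factor of a threefold tensor product
(indexed as `(H₁ ⊗ H₂) ⊗ H₃`). -/
noncomputable def ptraceFst₃ {a b c : Type*} [Fintype a]
    (ρ : Matrix ((a × b) × c) ((a × b) × c) ℂ) : Matrix (b × c) (b × c) ℂ :=
  Matrix.of fun p q => ∑ i : a, ρ ((i, p.1), p.2) ((i, q.1), q.2)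

/-!
Both inequalities are instances of the monotonicity of the relative entropy
`D(ρ‖σ) = Tr ρ (ln ρ - ln σ)`. The first compares `D(ρ₁₂‖ρ₁ ⊗ 1)` with its value after the `P^α`
have been measured on `H₁`; the second is Holevo's bound for the ensemble
`R_α = Tr₁[(P^α ⊗ 1) ρ₁₂]`, obtained by measuring the `Q^β` in each `D(R_α‖∑ R_α)`.

Monotonicity holds under the trace dual of every unital Schwarz map `T`. Relative entropy is an
integral over `t > 0` of the quasi-entropies
`sup_Y (2 Re Tr(Y ρ) - Tr(Y Y* σ) - t Tr(Y* Y ρ))`, up to a term depending only on `Tr ρ`; the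
supremum decreases because `T(Y) T(Y)* ≤ T(Y Y*)` turns a test matrix for the image into a test
matrix for the source with at least the same value.
-/

section EigenbasisMatrix

variable {n m : Type*} [Fintype n] [DecidableEq n] [Fintype m] [DecidableEq m]
  {σ : Matrix m m ℂ} {ρ : Matrix n n ℂ}

/-- The matrix of `Z` with respect to the eigenbasis of `ρ` on the source and that of `σ` on the
target. -/
noncomputable def eigenbasisMatrix (hσ : σ.IsHermitian) (hρ : ρ.IsHermitian)
    (Z : Matrix m n ℂ) : Matrix m n ℂ :=
  (hσ.eigenvectorUnitary : Matrix m m ℂ)ᴴ * Z * (hρ.eigenvectorUnitary : Matrix n n ℂ)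

lemma eigenbasisMatrix_surjective (hσ : σ.IsHermitian) (hρ : ρ.IsHermitian) :
    Function.Surjective (eigenbasisMatrix hσ hρ) := by
  intro C
  have hV : (hσ.eigenvectorUnitary : Matrix m m ℂ)ᴴ * hσ.eigenvectorUnitary = 1 :=
    Unitary.coe_star_mul_self _
  have hU : (hρ.eigenvectorUnitary : Matrix n n ℂ)ᴴ * hρ.eigenvectorUnitary = 1 :=
    Unitary.coe_star_mul_self _
  refine ⟨(hσ.eigenvectorUnitary : Matrix m m ℂ) * C * (hρ.eigenvectorUnitary : Matrix n n ℂ)ᴴ, ?_⟩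
  simp only [eigenbasisMatrix, Matrix.mul_assoc, hU, Matrix.mul_one]
  rw [← Matrix.mul_assoc, hV, Matrix.one_mul]

lemma cfc_eq_eigenvectorUnitary_mul_diagonal_mul (hρ : ρ.IsHermitian) (f : ℝ → ℝ) :
    cfc f ρ = (hρ.eigenvectorUnitary : Matrix n n ℂ) *
      diagonal (fun i => (f (hρ.eigenvalues i) : ℂ)) *
        (hρ.eigenvectorUnitary : Matrix n n ℂ)ᴴ := by
  rw [hρ.cfc_eq, Matrix.IsHermitian.cfc, Unitary.conjStarAlgAut_apply]
  rfl

lemma trace_conjTranspose_mul_cfc_mul_mul_cfc (hσ : σ.IsHermitian) (hρ : ρ.IsHermitian)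
    (X Z : Matrix m n ℂ) (g f : ℝ → ℝ) :
    (Xᴴ * cfc g σ * Z * cfc f ρ).trace =
      ∑ j, ∑ i, (g (hσ.eigenvalues j) * f (hρ.eigenvalues i) : ℂ) *
        (star (eigenbasisMatrix hσ hρ X j i) * eigenbasisMatrix hσ hρ Z j i) := by
  have hcycle : (Xᴴ * cfc g σ * Z * cfc f ρ).trace =
      ((eigenbasisMatrix hσ hρ X)ᴴ * (diagonal (fun j => (g (hσ.eigenvalues j) : ℂ)) *
        eigenbasisMatrix hσ hρ Z * diagonal (fun i => (f (hρ.eigenvalues i) : ℂ)))).trace := by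
    rw [cfc_eq_eigenvectorUnitary_mul_diagonal_mul hσ,
      cfc_eq_eigenvectorUnitary_mul_diagonal_mul hρ, ← Matrix.mul_assoc, Matrix.trace_mul_comm]
    simp only [eigenbasisMatrix, conjTranspose_mul, conjTranspose_conjTranspose, Matrix.mul_assoc]
  rw [hcycle, Finset.sum_comm, Matrix.trace]
  refine Finset.sum_congr rfl fun i _ => ?_
  rw [diag_apply, Matrix.mul_apply]
  refine Finset.sum_congr rfl fun j _ => ?_
  rw [mul_diagonal, diagonal_mul, conjTranspose_apply]
  ring

end EigenbasisMatrix

section RelEntropy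

variable {n : Type*} [Fintype n] [DecidableEq n] {ρ σ : Matrix n n ℂ}

/-- The transition probabilities `|⟨vⱼ, uᵢ⟩|²` between the eigenvectors `vⱼ` of `σ` and `uᵢ`
of `ρ`. -/
noncomputable def eigenOverlap (hσ : σ.IsHermitian) (hρ : ρ.IsHermitian) (j i : n) : ℝ :=
  Complex.normSq (eigenbasisMatrix hσ hρ 1 j i)

lemma re_trace_cfc_mul_cfc (hσ : σ.IsHermitian) (hρ : ρ.IsHermitian) (g f : ℝ → ℝ) :
    (cfc g σ * cfc f ρ).trace.re =
      ∑ j, ∑ i, g (hσ.eigenvalues j) * f (hρ.eigenvalues i) * eigenOverlap hσ hρ j i := by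
  have h := trace_conjTranspose_mul_cfc_mul_mul_cfc hσ hρ 1 1 g f
  simp only [conjTranspose_one, Matrix.one_mul, Matrix.mul_one, Complex.star_def,
    ← Complex.normSq_eq_conj_mul_self, ← Complex.ofReal_mul] at h
  simp only [h, ← Complex.ofReal_sum, Complex.ofReal_re, eigenOverlap]

lemma re_trace_cfc (hρ : ρ.IsHermitian) (f : ℝ → ℝ) :
    (cfc f ρ).trace.re = ∑ i, f (hρ.eigenvalues i) := by
  rw [cfc_eq_eigenvectorUnitary_mul_diagonal_mul hρ, Matrix.trace_mul_cycle,
    show (hρ.eigenvectorUnitary : Matrix n n ℂ)ᴴ * hρ.eigenvectorUnitary = 1 from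
      Unitary.coe_star_mul_self _, Matrix.one_mul, trace_diagonal, Complex.re_sum]
  simp only [Complex.ofReal_re]

lemma re_trace_cfc_eq_sum_eigenOverlap (hσ : σ.IsHermitian) (hρ : ρ.IsHermitian) (f : ℝ → ℝ) :
    (cfc f ρ).trace.re = ∑ j, ∑ i, f (hρ.eigenvalues i) * eigenOverlap hσ hρ j i := by
  have h := re_trace_cfc_mul_cfc hσ hρ 1 f
  simpa only [cfc_one ℝ σ (ha := hσ.isSelfAdjoint), Matrix.one_mul, Pi.one_apply, one_mul] using h

/-- The relative entropy `Tr ρ (ln ρ - ln σ)`. Since `Real.log 0 = 0`, the logarithms are taken on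
the supports, so the usual value `∞` is replaced by a finite one when `¬ SupportLE ρ σ`. -/
noncomputable def relEntropy (ρ σ : Matrix n n ℂ) : ℝ :=
  (ρ * (cfc Real.log ρ - cfc Real.log σ)).trace.re

/-- `supp ρ ⊆ supp σ`, phrased through the pairing with positive operators so that it is inherited
by the images of `ρ` and `σ` under every positive map. -/
def SupportLE (ρ σ : Matrix n n ℂ) : Prop :=
  ∀ A : Matrix n n ℂ, A.PosSemidef → (A * σ).trace = 0 → (A * ρ).trace = 0

lemma mul_cfc_log_self (hρ : ρ.IsHermitian) :
    ρ * cfc Real.log ρ = cfc (fun x => x * Real.log x) ρ := by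
  rw [cfc_mul (fun x => x) Real.log ρ continuousOn_id
    (Matrix.finite_real_spectrum.continuousOn _), cfc_id' ℝ ρ (ha := hρ.isSelfAdjoint)]

lemma re_trace_mul_cfc_log_self (hρ : ρ.IsHermitian) :
    (ρ * cfc Real.log ρ).trace.re = -entropy ρ := by
  rw [mul_cfc_log_self hρ, re_trace_cfc hρ, entropy, dif_pos hρ, ← Finset.sum_neg_distrib]
  simp only [negMulLog, neg_mul, neg_neg]

lemma relEntropy_eq_neg_entropy_sub (hρ : ρ.IsHermitian) :
    relEntropy ρ σ = -entropy ρ - (ρ * cfc Real.log σ).trace.re := by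
  rw [relEntropy, Matrix.mul_sub, trace_sub, Complex.sub_re, re_trace_mul_cfc_log_self hρ]

lemma relEntropy_eq_sum_eigenOverlap (hσ : σ.IsHermitian) (hρ : ρ.IsHermitian) :
    relEntropy ρ σ = ∑ j, ∑ i, eigenOverlap hσ hρ j i *
      (hρ.eigenvalues i * (Real.log (hρ.eigenvalues i) - Real.log (hσ.eigenvalues j))) := by
  have hself := re_trace_cfc_eq_sum_eigenOverlap hσ hρ fun x => x * Real.log x
  have hcross := re_trace_cfc_mul_cfc hσ hρ Real.log id
  rw [← mul_cfc_log_self hρ] at hself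
  rw [cfc_id ℝ ρ (ha := hρ.isSelfAdjoint), Matrix.trace_mul_comm] at hcross
  rw [relEntropy, Matrix.mul_sub, trace_sub, Complex.sub_re, hself, hcross]
  simp only [← Finset.sum_sub_distrib]
  refine Finset.sum_congr rfl fun j _ => Finset.sum_congr rfl fun i _ => ?_
  rw [id]
  ring

end RelEntropy

section QuasiEntropy

/-- The quadratic functional whose supremum over `Z` is `quasiEntropy t ρ σ`. -/
noncomputable def quasiEntropyForm {n : Type*} [Fintype n] (t : ℝ) (ρ σ Z : Matrix n n ℂ) : ℝ :=
  2 * (Z * ρ).trace.re - (Z * Zᴴ * σ).trace.re - t * (Zᴴ * Z * ρ).trace.re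

/-- Petz's quasi-entropy for the function `x ↦ 1 / (x + t)`, that is
`⟨ρ, (Lσ + t Rρ)⁻¹ ρ⟩` for the left multiplication `Lσ` by `σ` and the right multiplication `Rρ`
by `ρ`. The variational form avoids inverting this operator. -/
noncomputable def quasiEntropy {n : Type*} [Fintype n] (t : ℝ) (ρ σ : Matrix n n ℂ) : ℝ :=
  ⨆ Z, quasiEntropyForm t ρ σ Z

variable {n : Type*} [Fintype n] [DecidableEq n] {ρ σ : Matrix n n ℂ}

lemma quasiEntropyForm_eq_sum (hσ : σ.IsHermitian) (hρ : ρ.IsHermitian) (t : ℝ)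
    (Z : Matrix n n ℂ) :
    quasiEntropyForm t ρ σ Z = ∑ j, ∑ i,
      (2 * hρ.eigenvalues i *
          (star (eigenbasisMatrix hσ hρ 1 j i) * eigenbasisMatrix hσ hρ Z j i).re -
        (hσ.eigenvalues j + t * hρ.eigenvalues i) *
          Complex.normSq (eigenbasisMatrix hσ hρ Z j i)) := by
  have hlin := trace_conjTranspose_mul_cfc_mul_mul_cfc hσ hρ 1 Z 1 id
  have hleft := trace_conjTranspose_mul_cfc_mul_mul_cfc hσ hρ Z Z id 1
  have hright := trace_conjTranspose_mul_cfc_mul_mul_cfc hσ hρ Z Z 1 id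
  simp only [cfc_one ℝ _ (ha := hσ.isSelfAdjoint), cfc_one ℝ _ (ha := hρ.isSelfAdjoint),
    cfc_id ℝ _ (ha := hσ.isSelfAdjoint), cfc_id ℝ _ (ha := hρ.isSelfAdjoint), conjTranspose_one,
    Pi.one_apply, id, Complex.ofReal_one, one_mul, mul_one] at hlin hleft hright
  rw [quasiEntropyForm, hlin, Matrix.trace_mul_cycle, Matrix.trace_mul_cycle, hleft, hright]
  simp only [Complex.re_sum, Complex.re_ofReal_mul, Complex.star_def,
    ← Complex.normSq_eq_conj_mul_self, Complex.ofReal_re, Finset.mul_sum,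
    ← Finset.sum_sub_distrib]
  refine Finset.sum_congr rfl fun j _ => Finset.sum_congr rfl fun i _ => ?_
  ring

lemma two_mul_re_sub_mul_normSq_le {l d : ℝ} (hd : 0 < d) (w z : ℂ) :
    2 * l * (star w * z).re - d * Complex.normSq z ≤ Complex.normSq w * (l ^ 2 / d) := by
  have hsq : Complex.normSq w * (l ^ 2 / d) - (2 * l * (star w * z).re - d * Complex.normSq z) =
      d * Complex.normSq (z - (l / d : ℝ) * w) := by
    simp only [Complex.normSq_apply, Complex.star_def, Complex.mul_re, Complex.mul_im,
      Complex.sub_re, Complex.sub_im, Complex.conj_re, Complex.conj_im, Complex.ofReal_re,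
      Complex.ofReal_im]
    field_simp
    ring
  nlinarith [Complex.normSq_nonneg (z - (l / d : ℝ) * w)]

lemma two_mul_re_sub_mul_normSq_div {l d : ℝ} (hd : 0 < d) (w : ℂ) :
    2 * l * (star w * ((l / d : ℝ) * w)).re - d * Complex.normSq ((l / d : ℝ) * w) =
      Complex.normSq w * (l ^ 2 / d) := by
  rw [mul_left_comm, Complex.star_def, ← Complex.normSq_eq_conj_mul_self, Complex.re_ofReal_mul,
    Complex.ofReal_re, map_mul, Complex.normSq_ofReal]
  field_simp
  ring

/-- The `quasiEntropyForm` decouples in the eigenbases: each entry of `Z` is optimised separately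
by completing a square. -/
lemma isGreatest_range_quasiEntropyForm_sum (hσ : σ.PosSemidef) (hρ : ρ.PosSemidef) {t : ℝ}
    (ht : 0 < t) :
    IsGreatest (Set.range (quasiEntropyForm t ρ σ)) (∑ j, ∑ i, eigenOverlap hσ.1 hρ.1 j i *
      (hρ.1.eigenvalues i ^ 2 / (hσ.1.eigenvalues j + t * hρ.1.eigenvalues i))) := by
  have hnn : ∀ j i, 0 ≤ hσ.1.eigenvalues j + t * hρ.1.eigenvalues i := fun j i =>
    add_nonneg (hσ.eigenvalues_nonneg j) (mul_nonneg ht.le (hρ.eigenvalues_nonneg i))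
  have hzero : ∀ j i, hσ.1.eigenvalues j + t * hρ.1.eigenvalues i = 0 →
      hρ.1.eigenvalues i = 0 := fun j i h => by
    nlinarith [hσ.eigenvalues_nonneg j, hρ.eigenvalues_nonneg i]
  constructor
  · obtain ⟨Z, hZ⟩ := eigenbasisMatrix_surjective hσ.1 hρ.1 fun j i =>
      ((hρ.1.eigenvalues i / (hσ.1.eigenvalues j + t * hρ.1.eigenvalues i) : ℝ) : ℂ) *
        eigenbasisMatrix hσ.1 hρ.1 1 j i
    refine ⟨Z, ?_⟩
    rw [quasiEntropyForm_eq_sum hσ.1 hρ.1, hZ]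
    refine Finset.sum_congr rfl fun j _ => Finset.sum_congr rfl fun i _ => ?_
    rcases (hnn j i).eq_or_lt with h | h
    · simp only [← h, div_zero, Complex.ofReal_zero, zero_mul, mul_zero, Complex.zero_re, sub_zero]
    · exact two_mul_re_sub_mul_normSq_div h _
  · rintro _ ⟨Z, rfl⟩
    rw [quasiEntropyForm_eq_sum hσ.1 hρ.1]
    refine Finset.sum_le_sum fun j _ => Finset.sum_le_sum fun i _ => ?_
    rcases (hnn j i).eq_or_lt with h | h
    · rw [← h, hzero j i h.symm]
      simp only [mul_zero, zero_mul, sub_zero, div_zero, le_refl]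
    · exact two_mul_re_sub_mul_normSq_le h _ _

lemma quasiEntropy_eq_sum_eigenOverlap (hσ : σ.PosSemidef) (hρ : ρ.PosSemidef) {t : ℝ}
    (ht : 0 < t) :
    quasiEntropy t ρ σ = ∑ j, ∑ i, eigenOverlap hσ.1 hρ.1 j i *
      (hρ.1.eigenvalues i ^ 2 / (hσ.1.eigenvalues j + t * hρ.1.eigenvalues i)) :=
  (isGreatest_range_quasiEntropyForm_sum hσ hρ ht).csSup_eq

lemma isGreatest_range_quasiEntropyForm {n : Type*} [Fintype n] {ρ σ : Matrix n n ℂ}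
    (hσ : σ.PosSemidef) (hρ : ρ.PosSemidef) {t : ℝ} (ht : 0 < t) :
    IsGreatest (Set.range (quasiEntropyForm t ρ σ)) (quasiEntropy t ρ σ) := by
  classical
  rw [quasiEntropy_eq_sum_eigenOverlap hσ hρ ht]
  exact isGreatest_range_quasiEntropyForm_sum hσ hρ ht

end QuasiEntropy

section IntegralRepresentation

open MeasureTheory Set Filter Topology

lemma hasDerivAt_mul_log_add_mul_sub_log {l m t : ℝ} (hl : 0 < l) (hm : 0 < m) (ht : 0 ≤ t) :
    HasDerivAt (fun s => l * (Real.log (m + s * l) - Real.log (1 + s)))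
      (l ^ 2 / (m + t * l) - l / (1 + t)) t := by
  have hml : 0 < m + t * l := by positivity
  have hone : 0 < 1 + t := by positivity
  have h := ((((hasDerivAt_id t).mul_const l).const_add m).log hml.ne').sub
    (((hasDerivAt_id t).const_add 1).log hone.ne') |>.const_mul l
  refine h.congr_deriv ?_
  simp only [id, one_mul]
  ring

lemma tendsto_mul_log_add_mul_sub_log {l : ℝ} (hl : 0 < l) (m : ℝ) :
    Tendsto (fun t => l * (Real.log (m + t * l) - Real.log (1 + t))) atTop
      (𝓝 (l * Real.log l)) := by
  have hlim : Tendsto (fun t : ℝ => (m * t⁻¹ + l) / (t⁻¹ + 1)) atTop (𝓝 l) := by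
    have h := ((tendsto_inv_atTop_zero.const_mul m).add_const l).div
      (tendsto_inv_atTop_zero.add_const (1 : ℝ)) (by norm_num)
    rwa [mul_zero, zero_add, zero_add, div_one] at h
  refine ((hlim.log hl.ne').congr' ?_).const_mul l
  filter_upwards [eventually_gt_atTop 0, eventually_gt_atTop (-m / l)] with t ht hmt
  have hml : 0 < m + t * l := by
    rw [div_lt_iff₀ hl] at hmt
    linarith
  rw [← Real.log_div hml.ne' (by positivity)]
  congr 1
  field_simp

/-- The integrand has the constant sign of `l - m`. -/
lemma integral_sq_div_sub_div {l m : ℝ} (hl : 0 ≤ l) (hm : 0 < m) :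
    IntegrableOn (fun t => l ^ 2 / (m + t * l) - l / (1 + t)) (Ioi 0) ∧
      ∫ t in Ioi 0, (l ^ 2 / (m + t * l) - l / (1 + t)) = l * (Real.log l - Real.log m) := by
  rcases hl.eq_or_lt with rfl | hl
  · simp
  have hderiv : ∀ t ∈ Ici (0 : ℝ), HasDerivAt _ _ t := fun t ht =>
    hasDerivAt_mul_log_add_mul_sub_log hl hm ht
  have hlim := tendsto_mul_log_add_mul_sub_log hl m
  have hsign : ∀ t : ℝ, 0 < t → l ^ 2 / (m + t * l) - l / (1 + t) =
      l / ((m + t * l) * (1 + t)) * (l - m) := fun t ht => by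
    have : 0 < m + t * l := by positivity
    field_simp
    ring
  have hcoef : ∀ t : ℝ, 0 < t → 0 ≤ l / ((m + t * l) * (1 + t)) := fun t ht => by positivity
  have hint : IntegrableOn (fun t => l ^ 2 / (m + t * l) - l / (1 + t)) (Ioi 0) := by
    rcases le_total m l with h | h
    · refine integrableOn_Ioi_deriv_of_nonneg' hderiv (fun t ht => ?_) hlim
      rw [hsign t ht]
      exact mul_nonneg (hcoef t ht) (sub_nonneg.2 h)
    · refine integrableOn_Ioi_deriv_of_nonpos' hderiv (fun t ht => ?_) hlim
      rw [hsign t ht]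
      exact mul_nonpos_of_nonneg_of_nonpos (hcoef t ht) (sub_nonpos.2 h)
  refine ⟨hint, ?_⟩
  rw [integral_Ioi_of_hasDerivAt_of_tendsto' hderiv hint hlim]
  simp only [zero_mul, add_zero, Real.log_one, sub_zero]
  ring

variable {n : Type*} [Fintype n] [DecidableEq n] {ρ σ : Matrix n n ℂ}

lemma eigenOverlap_nonneg (hσ : σ.IsHermitian) (hρ : ρ.IsHermitian) (j i : n) :
    0 ≤ eigenOverlap hσ hρ j i :=
  Complex.normSq_nonneg _

lemma posSemidef_cfc (hσ : σ.IsHermitian) {f : ℝ → ℝ} (hf : ∀ x, 0 ≤ f x) :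
    (cfc f σ).PosSemidef := by
  rw [cfc_eq_eigenvectorUnitary_mul_diagonal_mul hσ]
  refine PosSemidef.mul_mul_conjTranspose_same (PosSemidef.diagonal fun i => ?_) _
  exact Complex.zero_le_real.2 (hf _)

/-- The support condition is tested on the projection onto the kernel of `σ`. -/
lemma eigenOverlap_mul_eigenvalues_eq_zero (hσ : σ.IsHermitian) (hρ : ρ.PosSemidef)
    (hsupp : SupportLE ρ σ) {j : n} (hj : hσ.eigenvalues j = 0) (i : n) :
    eigenOverlap hσ hρ.1 j i * hρ.1.eigenvalues i = 0 := by
  let f : ℝ → ℝ := Set.indicator {0} 1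
  have hf : ∀ x, 0 ≤ f x := Set.indicator_nonneg fun _ _ => zero_le_one
  have hmul : cfc f σ * σ = 0 := by
    conv_lhs => enter [2]; rw [← cfc_id' ℝ σ (ha := hσ.isSelfAdjoint)]
    rw [← cfc_mul f (fun x => x) σ (Matrix.finite_real_spectrum.continuousOn _) continuousOn_id,
      ← cfc_zero ℝ σ]
    congr 1
    ext x
    by_cases hx : x = 0 <;> simp [f, hx]
  have hnn : ∀ j i, 0 ≤ f (hσ.eigenvalues j) * id (hρ.1.eigenvalues i) *
      eigenOverlap hσ hρ.1 j i := fun j i =>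
    mul_nonneg (mul_nonneg (hf _) (hρ.eigenvalues_nonneg i)) (eigenOverlap_nonneg ..)
  have hsum := re_trace_cfc_mul_cfc hσ hρ.1 f id
  rw [cfc_id ℝ ρ (ha := hρ.1.isSelfAdjoint),
    hsupp _ (posSemidef_cfc hσ hf) (by rw [hmul, trace_zero]), Complex.zero_re, eq_comm,
    Finset.sum_eq_zero_iff_of_nonneg fun j _ => Finset.sum_nonneg fun i _ => hnn j i] at hsum
  have hji := (Finset.sum_eq_zero_iff_of_nonneg fun i _ => hnn j i).1 (hsum j (Finset.mem_univ j))
    i (Finset.mem_univ i)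
  simpa [f, hj, mul_comm] using hji

lemma integral_eigenOverlap_mul (hσ : σ.PosSemidef) (hρ : ρ.PosSemidef)
    (hsupp : SupportLE ρ σ) (j i : n) :
    IntegrableOn (fun t => eigenOverlap hσ.1 hρ.1 j i *
        (hρ.1.eigenvalues i ^ 2 / (hσ.1.eigenvalues j + t * hρ.1.eigenvalues i) -
          hρ.1.eigenvalues i / (1 + t))) (Ioi 0) ∧
      ∫ t in Ioi 0, eigenOverlap hσ.1 hρ.1 j i *
        (hρ.1.eigenvalues i ^ 2 / (hσ.1.eigenvalues j + t * hρ.1.eigenvalues i) -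
          hρ.1.eigenvalues i / (1 + t)) = eigenOverlap hσ.1 hρ.1 j i *
      (hρ.1.eigenvalues i *
        (Real.log (hρ.1.eigenvalues i) - Real.log (hσ.1.eigenvalues j))) := by
  rcases (hσ.eigenvalues_nonneg j).eq_or_lt with hj | hj
  · rcases mul_eq_zero.1 (eigenOverlap_mul_eigenvalues_eq_zero hσ.1 hρ hsupp hj.symm i) with h | h
      <;> simp [h]
  · obtain ⟨hint, heq⟩ := integral_sq_div_sub_div (hρ.eigenvalues_nonneg i) hj
    exact ⟨hint.const_mul _, by rw [integral_const_mul, heq]⟩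

lemma quasiEntropy_sub_trace_div_eq_sum (hσ : σ.PosSemidef) (hρ : ρ.PosSemidef) {t : ℝ}
    (ht : 0 < t) :
    quasiEntropy t ρ σ - ρ.trace.re / (1 + t) = ∑ j, ∑ i, eigenOverlap hσ.1 hρ.1 j i *
      (hρ.1.eigenvalues i ^ 2 / (hσ.1.eigenvalues j + t * hρ.1.eigenvalues i) -
        hρ.1.eigenvalues i / (1 + t)) := by
  have htr := re_trace_cfc_eq_sum_eigenOverlap hσ.1 hρ.1 id
  rw [cfc_id ℝ ρ (ha := hρ.1.isSelfAdjoint)] at htr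
  simp only [quasiEntropy_eq_sum_eigenOverlap hσ hρ ht, htr, Finset.sum_div,
    ← Finset.sum_sub_distrib, id]
  refine Finset.sum_congr rfl fun j _ => Finset.sum_congr rfl fun i _ => ?_
  ring

lemma integral_quasiEntropy_sub (hσ : σ.PosSemidef) (hρ : ρ.PosSemidef)
    (hsupp : SupportLE ρ σ) :
    IntegrableOn (fun t => quasiEntropy t ρ σ - ρ.trace.re / (1 + t)) (Ioi 0) ∧
      ∫ t in Ioi 0, (quasiEntropy t ρ σ - ρ.trace.re / (1 + t)) = relEntropy ρ σ := by
  have hterm := integral_eigenOverlap_mul hσ hρ hsupp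
  have hsum : EqOn (fun t => quasiEntropy t ρ σ - ρ.trace.re / (1 + t)) _ (Ioi 0) :=
    fun _ ht => quasiEntropy_sub_trace_div_eq_sum hσ hρ ht
  have hint : ∀ j, IntegrableOn _ (Ioi (0 : ℝ)) := fun j =>
    integrable_finsetSum Finset.univ fun i _ => (hterm j i).1
  constructor
  · exact (integrableOn_congr_fun hsum measurableSet_Ioi).2
      (integrable_finsetSum _ fun j _ => hint j)
  · rw [setIntegral_congr_fun measurableSet_Ioi hsum, integral_finsetSum _ fun j _ => hint j,
      relEntropy_eq_sum_eigenOverlap hσ.1 hρ.1]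
    refine Finset.sum_congr rfl fun j _ => ?_
    rw [integral_finsetSum _ fun i _ => (hterm j i).1]
    exact Finset.sum_congr rfl fun i _ => (hterm j i).2

end IntegralRepresentation

section TraceDuality

variable {n : Type*} [Fintype n] {A B ρ σ : Matrix n n ℂ}

open scoped MatrixOrder in
lemma exists_eq_conjTranspose_mul_self (hA : A.PosSemidef) : ∃ C : Matrix n n ℂ, A = Cᴴ * C := by
  classical
  exact (CStarAlgebra.nonneg_iff_eq_star_mul_self (a := A)).1 hA.nonneg

lemma trace_mul_nonneg (hA : A.PosSemidef) (hB : B.PosSemidef) : 0 ≤ (A * B).trace := by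
  obtain ⟨C, rfl⟩ := exists_eq_conjTranspose_mul_self hA
  rw [Matrix.mul_assoc, Matrix.trace_mul_comm]
  exact (hB.mul_mul_conjTranspose_same C).trace_nonneg

lemma posSemidef_of_forall_trace_mul_nonneg
    (h : ∀ A : Matrix n n ℂ, A.PosSemidef → 0 ≤ (A * ρ).trace) : ρ.PosSemidef := by
  classical
  rw [← Matrix.isPositive_toEuclideanLin_iff, LinearMap.isPositive_iff_complex]
  intro x
  have hx := h _ (posSemidef_vecMulVec_self_star (x : n → ℂ))
  rw [vecMulVec_mul, trace_vecMulVec, dotProduct_comm, ← dotProduct_mulVec] at hx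
  have hinner : 0 ≤ inner ℂ (Matrix.toEuclideanLin ρ x) x := by
    rwa [← star_nonneg_iff, Complex.star_def, inner_conj_symm,
      EuclideanSpace.inner_eq_star_dotProduct, dotProduct_comm, Matrix.ofLp_toLpLin,
      Matrix.toLin'_apply]
  exact ⟨(Complex.eq_re_of_ofReal_le hinner).symm, (Complex.le_def.1 hinner).1⟩

end TraceDuality

section SchwarzMap

variable {ι k n : Type*} [Fintype k] [Fintype n] {T : (ι → Matrix k k ℂ) →ₗ[ℂ] Matrix n n ℂ}
  {ρ σ : Matrix n n ℂ} {ρ' σ' : ι → Matrix k k ℂ}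

/-- The family `ρ'` is the image of `ρ` under the Schrödinger-picture (trace) dual of `T`. -/
def IsTraceDual [Fintype ι] (T : (ι → Matrix k k ℂ) →ₗ[ℂ] Matrix n n ℂ) (ρ : Matrix n n ℂ)
    (ρ' : ι → Matrix k k ℂ) : Prop :=
  ∀ Y, ∑ α, (Y α * ρ' α).trace = (T Y * ρ).trace

lemma IsTraceDual.trace_single_mul [Fintype ι] [DecidableEq ι] (h : IsTraceDual T ρ ρ') (α : ι)
    (A : Matrix k k ℂ) : (T (Pi.single α A) * ρ).trace = (A * ρ' α).trace := by
  rw [← h, Finset.sum_eq_single α (fun β _ hβ => by simp [hβ]) (by simp), Pi.single_eq_same]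

variable [DecidableEq k] [DecidableEq n]

/-- A unital Schwarz map in the Heisenberg picture, from the block-diagonal algebra
`ι → Matrix k k ℂ` to `Matrix n n ℂ`. -/
structure IsSchwarzMap (T : (ι → Matrix k k ℂ) →ₗ[ℂ] Matrix n n ℂ) : Prop where
  map_one : T 1 = 1
  map_star : ∀ Y, T (star Y) = (T Y)ᴴ
  schwarz : ∀ Y, (T (Y * star Y) - T Y * (T Y)ᴴ).PosSemidef

lemma IsSchwarzMap.posSemidef_apply (hT : IsSchwarzMap T) {Y : ι → Matrix k k ℂ}
    (hY : ∀ α, (Y α).PosSemidef) : (T Y).PosSemidef := by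
  choose C hC using fun α => exists_eq_conjTranspose_mul_self (hY α)
  have h := (hT.schwarz (star C)).add (posSemidef_self_mul_conjTranspose (T (star C)))
  rwa [sub_add_cancel, star_star, show star C * C = Y from funext fun α => (hC α).symm] at h

lemma IsSchwarzMap.posSemidef_apply_single [DecidableEq ι] (hT : IsSchwarzMap T) (α : ι)
    {A : Matrix k k ℂ} (hA : A.PosSemidef) : (T (Pi.single α A)).PosSemidef := by
  refine hT.posSemidef_apply fun β => ?_
  rcases eq_or_ne β α with rfl | hβ
  · rwa [Pi.single_eq_same]
  · rw [Pi.single_eq_of_ne hβ]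
    exact .zero

variable [Fintype ι]

lemma IsSchwarzMap.posSemidef_traceDual (hT : IsSchwarzMap T) (h : IsTraceDual T ρ ρ')
    (hρ : ρ.PosSemidef) (α : ι) : (ρ' α).PosSemidef := by
  classical
  refine posSemidef_of_forall_trace_mul_nonneg fun A hA => ?_
  rw [← h.trace_single_mul]
  exact trace_mul_nonneg (hT.posSemidef_apply_single α hA) hρ

lemma IsSchwarzMap.supportLE_traceDual (hT : IsSchwarzMap T) (hρ : IsTraceDual T ρ ρ')
    (hσ : IsTraceDual T σ σ') (hsupp : SupportLE ρ σ) (α : ι) : SupportLE (ρ' α) (σ' α) := by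
  classical
  intro A hA hzero
  rw [← hρ.trace_single_mul]
  exact hsupp _ (hT.posSemidef_apply_single α hA) (by rw [hσ.trace_single_mul, hzero])

lemma IsSchwarzMap.sum_trace_traceDual (hT : IsSchwarzMap T) (h : IsTraceDual T ρ ρ') :
    ∑ α, (ρ' α).trace = ρ.trace := by
  simpa only [Pi.one_apply, Matrix.one_mul, hT.map_one] using h 1

lemma IsSchwarzMap.re_trace_mul_conjTranspose_mul_le (hT : IsSchwarzMap T)
    (h : IsTraceDual T σ σ') (hσ : σ.PosSemidef) (Y : ι → Matrix k k ℂ) :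
    (T Y * (T Y)ᴴ * σ).trace.re ≤ ∑ α, (Y α * (Y α)ᴴ * σ' α).trace.re := by
  have hnn := trace_mul_nonneg (hT.schwarz Y) hσ
  rw [Matrix.sub_mul, trace_sub, ← h, sub_nonneg] at hnn
  rw [← Complex.re_sum]
  exact (Complex.le_def.1 hnn).1

lemma IsSchwarzMap.sum_quasiEntropyForm_le (hT : IsSchwarzMap T) (hρ : IsTraceDual T ρ ρ')
    (hσ : IsTraceDual T σ σ') (hρpos : ρ.PosSemidef) (hσpos : σ.PosSemidef) {t : ℝ} (ht : 0 ≤ t)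
    (Y : ι → Matrix k k ℂ) :
    ∑ α, quasiEntropyForm t (ρ' α) (σ' α) (Y α) ≤ quasiEntropyForm t ρ σ (T Y) := by
  have hlin : ∑ α, (Y α * ρ' α).trace.re = (T Y * ρ).trace.re := by
    rw [← hρ Y, Complex.re_sum]
  have hleft := hT.re_trace_mul_conjTranspose_mul_le hσ hσpos Y
  have hright := hT.re_trace_mul_conjTranspose_mul_le hρ hρpos (star Y)
  simp only [hT.map_star, Pi.star_apply, star_eq_conjTranspose, conjTranspose_conjTranspose]
    at hright
  simp only [quasiEntropyForm, Finset.sum_sub_distrib, ← Finset.mul_sum, hlin]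
  gcongr

lemma IsSchwarzMap.sum_quasiEntropy_le (hT : IsSchwarzMap T) (hρ : IsTraceDual T ρ ρ')
    (hσ : IsTraceDual T σ σ') (hρpos : ρ.PosSemidef) (hσpos : σ.PosSemidef) {t : ℝ} (ht : 0 < t) :
    ∑ α, quasiEntropy t (ρ' α) (σ' α) ≤ quasiEntropy t ρ σ := by
  choose Y hY using fun α => (isGreatest_range_quasiEntropyForm
    (hT.posSemidef_traceDual hσ hσpos α) (hT.posSemidef_traceDual hρ hρpos α) ht).1
  calc ∑ α, quasiEntropy t (ρ' α) (σ' α)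
      = ∑ α, quasiEntropyForm t (ρ' α) (σ' α) (Y α) := by simp only [hY]
    _ ≤ quasiEntropyForm t ρ σ (T Y) := hT.sum_quasiEntropyForm_le hρ hσ hρpos hσpos ht.le Y
    _ ≤ quasiEntropy t ρ σ := (isGreatest_range_quasiEntropyForm hσpos hρpos ht).2 ⟨_, rfl⟩

open MeasureTheory in
theorem IsSchwarzMap.sum_relEntropy_le (hT : IsSchwarzMap T) (hρ : IsTraceDual T ρ ρ')
    (hσ : IsTraceDual T σ σ') (hρpos : ρ.PosSemidef) (hσpos : σ.PosSemidef)
    (hsupp : SupportLE ρ σ) : ∑ α, relEntropy (ρ' α) (σ' α) ≤ relEntropy ρ σ := by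
  have hout := fun α => integral_quasiEntropy_sub (hT.posSemidef_traceDual hσ hσpos α)
    (hT.posSemidef_traceDual hρ hρpos α) (hT.supportLE_traceDual hρ hσ hsupp α)
  have hin := integral_quasiEntropy_sub hσpos hρpos hsupp
  have htr : ∑ α, (ρ' α).trace.re = ρ.trace.re := by
    rw [← hT.sum_trace_traceDual hρ, Complex.re_sum]
  simp only [← (hout _).2, ← hin.2]
  rw [← integral_finsetSum _ fun α _ => (hout α).1]
  refine setIntegral_mono_on (integrable_finsetSum _ fun α _ => (hout α).1) hin.1
    measurableSet_Ioi fun t ht => ?_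
  rw [Finset.sum_sub_distrib, ← Finset.sum_div, htr]
  exact sub_le_sub_right (hT.sum_quasiEntropy_le hρ hσ hρpos hσpos ht) _

end SchwarzMap

section InstrumentDual

variable {ι k n : Type*} [Fintype n]

lemma conjTranspose_mul_of_commute {A B : Matrix n n ℂ} (hA : A.IsHermitian)
    (h : Commute A B) : (A * B)ᴴ = A * Bᴴ := by
  rw [h.eq, conjTranspose_mul, hA.eq]

variable [Fintype ι] [Fintype k] [DecidableEq k] [DecidableEq n] {E : ι → Matrix n n ℂ}
  {φ : Matrix k k ℂ →⋆ₐ[ℂ] Matrix n n ℂ}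

/-- The Heisenberg picture of measuring the effects `E α` while keeping the quantum system whose
observables are represented by `φ`. -/
noncomputable def instrumentDual (E : ι → Matrix n n ℂ) (φ : Matrix k k ℂ →⋆ₐ[ℂ] Matrix n n ℂ) :
    (ι → Matrix k k ℂ) →ₗ[ℂ] Matrix n n ℂ :=
  ∑ α, LinearMap.mulLeft ℂ (E α) ∘ₗ φ.toAlgHom.toLinearMap ∘ₗ LinearMap.proj α

lemma instrumentDual_apply (Y : ι → Matrix k k ℂ) :
    instrumentDual E φ Y = ∑ α, E α * φ (Y α) := by
  simp only [instrumentDual, LinearMap.sum_apply]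
  rfl

-- The Schwarz defect `∑ Eα Xα Xαᴴ - Z Zᴴ` is a variance: it is the `E`-average of the squared
-- deviations of the `Xα` from their mean `Z`.
lemma posSemidef_sum_mul_sub_mul_conjTranspose (hE : ∀ α, (E α).PosSemidef)
    (hEsum : ∑ α, E α = 1) {X : ι → Matrix n n ℂ} (hcomm : ∀ α, Commute (E α) (X α)) :
    (∑ α, E α * (X α * (X α)ᴴ) - (∑ α, E α * X α) * (∑ α, E α * X α)ᴴ).PosSemidef := by
  set Z := ∑ α, E α * X α with hZ
  have hdev (α : ι) : (X α - Z) * E α * (X α - Z)ᴴ =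
      E α * (X α * (X α)ᴴ) - E α * X α * Zᴴ - Z * (E α * X α)ᴴ + Z * E α * Zᴴ := by
    rw [conjTranspose_mul_of_commute (hE α).1 (hcomm α), ← Matrix.mul_assoc (E α),
      (hcomm α).eq, conjTranspose_sub]
    noncomm_ring
  have hvar : ∑ α, E α * (X α * (X α)ᴴ) - Z * Zᴴ = ∑ α, (X α - Z) * E α * (X α - Z)ᴴ := by
    simp only [hdev, Finset.sum_add_distrib, Finset.sum_sub_distrib, ← Finset.sum_mul,
      ← Finset.mul_sum, ← conjTranspose_sum, hEsum, ← hZ]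
    noncomm_ring
  rw [hvar]
  exact posSemidef_sum _ fun α _ => (hE α).mul_mul_conjTranspose_same _

lemma isSchwarzMap_instrumentDual (hE : ∀ α, (E α).PosSemidef) (hEsum : ∑ α, E α = 1)
    (hcomm : ∀ α A, Commute (E α) (φ A)) : IsSchwarzMap (instrumentDual E φ) where
  map_one := by simp only [instrumentDual_apply, Pi.one_apply, map_one, mul_one, hEsum]
  map_star Y := by
    simp only [instrumentDual_apply, conjTranspose_sum, Pi.star_apply, map_star,
      conjTranspose_mul_of_commute (hE _).1 (hcomm _ _)]
    rfl
  schwarz Y := by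
    simp only [instrumentDual_apply, Pi.mul_apply, Pi.star_apply, map_mul, map_star]
    exact posSemidef_sum_mul_sub_mul_conjTranspose hE hEsum fun α => hcomm α (Y α)

end InstrumentDual

section KroneckerHom

variable {n k : Type*} [Fintype n] [DecidableEq n] [Fintype k] [DecidableEq k]

variable (n k) in
/-- The embedding `A ↦ A ⊗ 1` of the observables of the first factor. -/
def kroneckerOneHom : Matrix n n ℂ →⋆ₐ[ℂ] Matrix (n × k) (n × k) ℂ where
  toFun A := A ⊗ₖ 1
  map_one' := one_kronecker_one
  map_mul' A B := by rw [← mul_kronecker_mul, Matrix.one_mul]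
  map_zero' := zero_kronecker _
  map_add' A B := add_kronecker A B _
  commutes' c := by
    simp only [Algebra.algebraMap_eq_smul_one, smul_kronecker, one_kronecker_one]
  map_star' A := by simp only [star_eq_conjTranspose, conjTranspose_kronecker, conjTranspose_one]

variable (n k) in
/-- The embedding `B ↦ 1 ⊗ B` of the observables of the second factor. -/
def oneKroneckerHom : Matrix k k ℂ →⋆ₐ[ℂ] Matrix (n × k) (n × k) ℂ where
  toFun B := 1 ⊗ₖ B
  map_one' := one_kronecker_one
  map_mul' A B := by rw [← mul_kronecker_mul, Matrix.one_mul]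
  map_zero' := kronecker_zero _
  map_add' A B := kronecker_add _ A B
  commutes' c := by
    simp only [Algebra.algebraMap_eq_smul_one, kronecker_smul, one_kronecker_one]
  map_star' A := by simp only [star_eq_conjTranspose, conjTranspose_kronecker, conjTranspose_one]

lemma kronecker_one_mul_oneKroneckerHom (A : Matrix n n ℂ) (B : Matrix k k ℂ) :
    A ⊗ₖ 1 * oneKroneckerHom n k B = A ⊗ₖ B :=
  (mul_kronecker_mul A 1 1 B).symm.trans (by rw [Matrix.mul_one, Matrix.one_mul])

lemma commute_kronecker_one_oneKroneckerHom (A : Matrix n n ℂ) (B : Matrix k k ℂ) :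
    Commute (A ⊗ₖ 1) (oneKroneckerHom n k B) :=
  (kronecker_one_mul_oneKroneckerHom A B).trans
    (.trans (by rw [Matrix.mul_one, Matrix.one_mul]) (mul_kronecker_mul 1 A B 1))

lemma cfc_kronecker_one {A : Matrix n n ℂ} (hA : A.IsHermitian) (f : ℝ → ℝ) :
    cfc f (A ⊗ₖ (1 : Matrix k k ℂ)) = cfc f A ⊗ₖ 1 :=
  ((kroneckerOneHom n k).map_cfc f A (Matrix.finite_real_spectrum.continuousOn _)
    (LinearMap.continuous_of_finiteDimensional (kroneckerOneHom n k).toAlgHom.toLinearMap)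
    hA.isSelfAdjoint (hA.isSelfAdjoint.map (kroneckerOneHom n k))).symm

end KroneckerHom

section PartialTrace

variable {ι n k : Type*}

lemma sum_kronecker [Fintype ι] (A : ι → Matrix n n ℂ) (B : Matrix k k ℂ) :
    ∑ α, A α ⊗ₖ B = (∑ α, A α) ⊗ₖ B := by
  ext i j
  simp only [Matrix.sum_apply, kroneckerMap_apply, Finset.sum_mul]

lemma ptraceFst_kronecker [Fintype n] (A : Matrix n n ℂ) (B : Matrix k k ℂ) :
    ptraceFst (A ⊗ₖ B) = A.trace • B := by
  ext i j
  simp only [ptraceFst, of_apply, kroneckerMap_apply, Matrix.trace, diag_apply, Matrix.smul_apply,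
    smul_eq_mul, Finset.sum_mul]

lemma posSemidef_ptraceSnd [Fintype k] {ρ : Matrix (n × k) (n × k) ℂ} (hρ : ρ.PosSemidef) :
    (ptraceSnd ρ).PosSemidef := by
  have hblocks : ptraceSnd ρ = ∑ a, ρ.submatrix (fun i => (i, a)) (fun i => (i, a)) := by
    ext i j
    simp only [ptraceSnd, of_apply, Matrix.sum_apply, submatrix_apply]
  rw [hblocks]
  exact posSemidef_sum _ fun a _ => hρ.submatrix _

variable [Fintype n] [Fintype k]

lemma trace_mul_ptraceSnd [DecidableEq k] (A : Matrix n n ℂ) (ρ : Matrix (n × k) (n × k) ℂ) :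
    (A * ptraceSnd ρ).trace = (A ⊗ₖ 1 * ρ).trace := by
  simp only [Matrix.trace, diag_apply, Matrix.mul_apply, ptraceSnd, of_apply, Finset.mul_sum,
    Fintype.sum_prod_type, kroneckerMap_apply, one_apply, mul_ite, ite_mul, mul_one, mul_zero,
    zero_mul, Finset.sum_ite_eq, Finset.mem_univ, if_true]
  exact Finset.sum_congr rfl fun i _ => Finset.sum_comm

lemma trace_mul_ptraceFst [DecidableEq n] (B : Matrix k k ℂ) (ρ : Matrix (n × k) (n × k) ℂ) :
    (B * ptraceFst ρ).trace = (1 ⊗ₖ B * ρ).trace := by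
  simp only [Matrix.trace, diag_apply, Matrix.mul_apply, ptraceFst, of_apply, Finset.mul_sum,
    Fintype.sum_prod_type_right, kroneckerMap_apply, one_apply, ite_mul, one_mul, zero_mul,
    Finset.sum_ite_eq, Finset.mem_univ, if_true]
  exact Finset.sum_congr rfl fun i _ => Finset.sum_comm

variable [DecidableEq k]

lemma trace_mul_ptraceFst_kronecker_one_mul (A : Matrix n n ℂ) (B : Matrix k k ℂ)
    (ρ : Matrix (n × k) (n × k) ℂ) :
    (B * ptraceFst (A ⊗ₖ 1 * ρ)).trace = (A ⊗ₖ B * ρ).trace := by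
  classical
  rw [trace_mul_ptraceFst, ← Matrix.mul_assoc, ← mul_kronecker_mul, Matrix.one_mul, Matrix.mul_one]

lemma ptraceFst_kronecker_one_mul_kronecker_one {A B : Matrix n n ℂ} (hA : A.PosSemidef)
    (hB : B.PosSemidef) :
    ptraceFst (A ⊗ₖ 1 * B ⊗ₖ 1) = algebraMap ℝ (Matrix k k ℂ) (A * B).trace.re := by
  rw [← mul_kronecker_mul, Matrix.one_mul, ptraceFst_kronecker, Algebra.algebraMap_eq_smul_one,
    Complex.eq_re_of_ofReal_le (trace_mul_nonneg hA hB), Complex.ofReal_re, Complex.coe_smul]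

lemma trace_ptraceFst_kronecker_one_mul (A : Matrix n n ℂ) (ρ : Matrix (n × k) (n × k) ℂ) :
    (ptraceFst (A ⊗ₖ 1 * ρ)).trace = (A * ptraceSnd ρ).trace := by
  rw [trace_mul_ptraceSnd, ← trace_mul_ptraceFst_kronecker_one_mul, Matrix.one_mul]

lemma posSemidef_ptraceFst_kronecker_one_mul {A : Matrix n n ℂ} {ρ : Matrix (n × k) (n × k) ℂ}
    (hA : A.PosSemidef) (hρ : ρ.PosSemidef) : (ptraceFst (A ⊗ₖ 1 * ρ)).PosSemidef :=
  posSemidef_of_forall_trace_mul_nonneg fun B hB => by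
    rw [trace_mul_ptraceFst_kronecker_one_mul]
    exact trace_mul_nonneg (hA.kronecker hB) hρ

lemma sum_ptraceFst_kronecker_one_mul [Fintype ι] [DecidableEq n] {P : ι → Matrix n n ℂ}
    (hP : ∑ α, P α = 1) (ρ : Matrix (n × k) (n × k) ℂ) :
    ∑ α, ptraceFst (P α ⊗ₖ 1 * ρ) = ptraceFst ρ := by
  rw [Matrix.ext_iff_trace_mul_left]
  intro B
  simp only [Finset.mul_sum, trace_sum, trace_mul_ptraceFst_kronecker_one_mul]
  rw [← trace_sum, ← Finset.sum_mul, sum_kronecker, hP, trace_mul_ptraceFst]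

end PartialTrace

section Support

variable {ι n k : Type*} [Fintype ι] [Fintype n] [Fintype k]

lemma supportLE_sum {R : ι → Matrix n n ℂ} (hR : ∀ α, (R α).PosSemidef) (α : ι) :
    SupportLE (R α) (∑ β, R β) := by
  intro A hA hzero
  rw [Finset.mul_sum, trace_sum,
    Finset.sum_eq_zero_iff_of_nonneg fun β _ => trace_mul_nonneg hA (hR β)] at hzero
  exact hzero α (Finset.mem_univ α)

lemma supportLE_sum_mul_mul_conjTranspose [DecidableEq n] {ρ : Matrix n n ℂ} (hρ : ρ.PosSemidef)
    (K : ι → Matrix n n ℂ) (c : ι → ℂ) (hK : ∑ s, c s • K s = 1) :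
    SupportLE ρ (∑ s, K s * ρ * (K s)ᴴ) := by
  intro A hA hzero
  obtain ⟨C, rfl⟩ := exists_eq_conjTranspose_mul_self hA
  rw [Finset.mul_sum, trace_sum, Finset.sum_eq_zero_iff_of_nonneg fun s _ =>
    trace_mul_nonneg hA (hρ.mul_mul_conjTranspose_same (K s))] at hzero
  obtain ⟨B, rfl⟩ := exists_eq_conjTranspose_mul_self hρ
  have hvanish (s : ι) : C * K s * Bᴴ = 0 := by
    rw [← trace_mul_conjTranspose_self_eq_zero_iff, ← hzero s (Finset.mem_univ s),
      Matrix.mul_assoc Cᴴ, Matrix.trace_mul_comm Cᴴ]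
    simp only [conjTranspose_mul, conjTranspose_conjTranspose, Matrix.mul_assoc]
  have hCB : C * Bᴴ = 0 := by
    calc C * Bᴴ = C * (∑ s, c s • K s) * Bᴴ := by rw [hK, Matrix.mul_one]
      _ = ∑ s, c s • (C * K s * Bᴴ) := by
          simp only [Finset.mul_sum, Finset.sum_mul, Matrix.mul_smul, Matrix.smul_mul]
      _ = 0 := by simp only [hvanish, smul_zero, Finset.sum_const_zero]
  rw [Matrix.mul_assoc, ← Matrix.mul_assoc C, hCB, Matrix.zero_mul, Matrix.mul_zero, trace_zero]

lemma ptraceSnd_kronecker_one [DecidableEq n] [DecidableEq k] (ρ : Matrix (n × k) (n × k) ℂ) :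
    ptraceSnd ρ ⊗ₖ 1 = ∑ s : k × k, (1 ⊗ₖ Matrix.single s.1 s.2 1 : Matrix (n × k) (n × k) ℂ) *
      ρ * (1 ⊗ₖ Matrix.single s.1 s.2 1)ᴴ := by
  ext ⟨i, a⟩ ⟨j, b⟩
  simp [ptraceSnd, Matrix.mul_apply, Matrix.sum_apply, Fintype.sum_prod_type, one_apply,
    conjTranspose_kronecker, Matrix.single_apply, ite_and, Finset.sum_ite_irrel, eq_comm (a := b)]

lemma supportLE_ptraceSnd_kronecker_one [DecidableEq k] {ρ : Matrix (n × k) (n × k) ℂ}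
    (hρ : ρ.PosSemidef) : SupportLE ρ (ptraceSnd ρ ⊗ₖ 1) := by
  classical
  rw [ptraceSnd_kronecker_one]
  refine supportLE_sum_mul_mul_conjTranspose hρ _ (fun s => if s.1 = s.2 then 1 else 0) ?_
  simp only [ite_smul, one_smul, zero_smul, Fintype.sum_prod_type, Finset.sum_ite_eq,
    Finset.mem_univ, if_true]
  exact (map_sum (oneKroneckerHom n k) _ _).symm.trans (by rw [sum_single_one, map_one])

end Support

section Scalar

variable {n : Type*} [Fintype n] [DecidableEq n]

lemma relEntropy_algebraMap_algebraMap (a b : ℝ) :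
    relEntropy (algebraMap ℝ (Matrix n n ℂ) a) (algebraMap ℝ _ b) =
      Fintype.card n * (a * (Real.log a - Real.log b)) := by
  rw [relEntropy, cfc_algebraMap, cfc_algebraMap, ← map_sub, ← map_mul,
    Algebra.algebraMap_eq_smul_one, trace_smul, trace_one, Complex.real_smul,
    ← Complex.ofReal_natCast, Complex.re_ofReal_mul, Complex.ofReal_re, mul_comm]

lemma relEntropy_algebraMap {ρ : Matrix n n ℂ} (hρ : ρ.IsHermitian) (b : ℝ) :
    relEntropy ρ (algebraMap ℝ _ b) = -entropy ρ - ρ.trace.re * Real.log b := by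
  rw [relEntropy_eq_neg_entropy_sub hρ, cfc_algebraMap, Algebra.algebraMap_eq_smul_one,
    Matrix.mul_smul, Matrix.mul_one, trace_smul, Complex.real_smul, Complex.re_ofReal_mul, mul_comm]

end Scalar

section Measurement

variable {ι κ n k : Type*} [Fintype n] [DecidableEq n] [Fintype k] [DecidableEq k]

/-- The trivial observable algebra, as the `1 × 1` matrices, embedded by multiples of `1`. -/
def scalarHom (n : Type*) [Fintype n] [DecidableEq n] :
    Matrix Unit Unit ℂ →⋆ₐ[ℂ] Matrix n n ℂ where
  toAlgHom := (Algebra.ofId ℂ _).comp (Matrix.uniqueAlgEquiv : _ ≃ₐ[ℂ] ℂ).toAlgHom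
  map_star' Y := algebraMap_star_comm (Y () ())

lemma scalarHom_apply (Y : Matrix Unit Unit ℂ) :
    scalarHom n Y = algebraMap ℂ (Matrix n n ℂ) (Y () ()) :=
  rfl

lemma commute_scalarHom (A : Matrix n n ℂ) (Y : Matrix Unit Unit ℂ) :
    Commute A (scalarHom n Y) := by
  rw [scalarHom_apply]
  exact Algebra.commute_algebraMap_right _ A

lemma isTraceDual_instrumentDual_scalarHom [Fintype κ] {Q : κ → Matrix n n ℂ}
    (hQ : ∀ β, (Q β).PosSemidef) {ρ : Matrix n n ℂ} (hρ : ρ.PosSemidef) :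
    IsTraceDual (instrumentDual Q (scalarHom n)) ρ
      fun β => algebraMap ℝ (Matrix Unit Unit ℂ) (Q β * ρ).trace.re := by
  intro Y
  have hreal (β : κ) : (((Q β * ρ).trace.re : ℝ) : ℂ) = (Q β * ρ).trace :=
    (Complex.eq_re_of_ofReal_le (trace_mul_nonneg (hQ β) hρ)).symm
  rw [instrumentDual_apply, Finset.sum_mul, trace_sum]
  refine Finset.sum_congr rfl fun β _ => ?_
  dsimp only
  rw [scalarHom_apply, Algebra.algebraMap_eq_smul_one, Algebra.algebraMap_eq_smul_one,
    Matrix.mul_smul, Matrix.mul_smul, Matrix.smul_mul, trace_smul, trace_smul, Matrix.mul_one,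
    Matrix.mul_one, Complex.real_smul, hreal, smul_eq_mul, mul_comm]
  congr 1
  exact Fintype.sum_unique _

lemma sum_relEntropy_measurement_le [Fintype κ] {Q : κ → Matrix n n ℂ}
    (hQ : ∀ β, (Q β).PosSemidef) (hQsum : ∑ β, Q β = 1) {ρ σ : Matrix n n ℂ}
    (hρ : ρ.PosSemidef) (hσ : σ.PosSemidef) (hsupp : SupportLE ρ σ) :
    ∑ β, (Q β * ρ).trace.re * (Real.log (Q β * ρ).trace.re - Real.log (Q β * σ).trace.re) ≤
      relEntropy ρ σ := by
  have hT : IsSchwarzMap (instrumentDual Q (scalarHom n)) :=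
    isSchwarzMap_instrumentDual hQ hQsum fun β => commute_scalarHom (Q β)
  have hmono := hT.sum_relEntropy_le (isTraceDual_instrumentDual_scalarHom hQ hρ)
    (isTraceDual_instrumentDual_scalarHom hQ hσ) hρ hσ hsupp
  simpa only [relEntropy_algebraMap_algebraMap, Fintype.card_unique, Nat.cast_one, one_mul]
    using hmono

lemma sum_relEntropy_sum [Fintype ι] {R : ι → Matrix n n ℂ} (hR : ∀ α, (R α).PosSemidef) :
    ∑ α, relEntropy (R α) (∑ β, R β) = entropy (∑ α, R α) - ∑ α, entropy (R α) := by
  simp only [relEntropy_eq_neg_entropy_sub (hR _).1, Finset.sum_sub_distrib]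
  rw [← Complex.re_sum, ← trace_sum, ← Finset.sum_mul, re_trace_mul_cfc_log_self
    (posSemidef_sum _ fun α _ => hR α).1, Finset.sum_neg_distrib]
  ring

theorem holevo_bound [Fintype ι] [Fintype κ] {R : ι → Matrix n n ℂ}
    (hR : ∀ α, (R α).PosSemidef) {Q : κ → Matrix n n ℂ} (hQ : ∀ β, (Q β).PosSemidef)
    (hQsum : ∑ β, Q β = 1) :
    ∑ β, negMulLog (Q β * ∑ α, R α).trace.re - ∑ α, ∑ β, negMulLog (Q β * R α).trace.re ≤
      entropy (∑ α, R α) - ∑ α, entropy (R α) := by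
  rw [← sum_relEntropy_sum hR]
  refine (Finset.sum_le_sum fun α _ => sum_relEntropy_measurement_le hQ hQsum (hR α)
    (posSemidef_sum _ fun β _ => hR β) (supportLE_sum hR α)).trans' (le_of_eq ?_)
  have hmarginal (β : κ) : ∑ α, (Q β * R α).trace.re * Real.log (Q β * ∑ α, R α).trace.re =
      -negMulLog (Q β * ∑ α, R α).trace.re := by
    rw [← Finset.sum_mul, ← Complex.re_sum, ← trace_sum, ← Finset.mul_sum, negMulLog, neg_mul,
      neg_neg]
  simp only [mul_sub, Finset.sum_sub_distrib]
  rw [Finset.sum_comm (f := fun α β => _ * Real.log (Q β * ∑ α, R α).trace.re)]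
  simp only [hmarginal, Finset.sum_neg_distrib, negMulLog, neg_mul]
  ring

lemma isTraceDual_instrumentDual_kronecker_one [Fintype ι] (P : ι → Matrix n n ℂ)
    (ρ : Matrix (n × k) (n × k) ℂ) :
    IsTraceDual (instrumentDual (fun α => P α ⊗ₖ 1) (oneKroneckerHom n k)) ρ
      fun α => ptraceFst (P α ⊗ₖ 1 * ρ) := by
  intro Y
  simp only [instrumentDual_apply, kronecker_one_mul_oneKroneckerHom, Finset.sum_mul, trace_sum,
    trace_mul_ptraceFst_kronecker_one_mul]

lemma relEntropy_ptraceSnd_kronecker_one {ρ : Matrix (n × k) (n × k) ℂ} (hρ : ρ.PosSemidef) :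
    relEntropy ρ (ptraceSnd ρ ⊗ₖ 1) = entropy (ptraceSnd ρ) - entropy ρ := by
  have hρ₁ := (posSemidef_ptraceSnd hρ).1
  rw [relEntropy_eq_neg_entropy_sub hρ.1, cfc_kronecker_one hρ₁, Matrix.trace_mul_comm,
    ← trace_mul_ptraceSnd, Matrix.trace_mul_comm, re_trace_mul_cfc_log_self hρ₁]
  ring

lemma entropy_sub_entropy_ptraceSnd_le [Fintype ι] {ρ : Matrix (n × k) (n × k) ℂ}
    (hρ : ρ.PosSemidef) {P : ι → Matrix n n ℂ} (hP : ∀ α, (P α).PosSemidef)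
    (hPsum : ∑ α, P α = 1) :
    entropy ρ - entropy (ptraceSnd ρ) ≤
      ∑ α, entropy (ptraceFst (P α ⊗ₖ 1 * ρ)) - ∑ α, negMulLog (P α * ptraceSnd ρ).trace.re := by
  have hρ₁ := posSemidef_ptraceSnd hρ
  have hT : IsSchwarzMap (instrumentDual (fun α => P α ⊗ₖ 1) (oneKroneckerHom n k)) :=
    isSchwarzMap_instrumentDual (fun α => (hP α).kronecker .one)
      (by rw [sum_kronecker, hPsum, one_kronecker_one])
      fun α => commute_kronecker_one_oneKroneckerHom (P α)
  have hmono := hT.sum_relEntropy_le (isTraceDual_instrumentDual_kronecker_one P ρ)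
    (isTraceDual_instrumentDual_kronecker_one P _) hρ (hρ₁.kronecker .one)
    (supportLE_ptraceSnd_kronecker_one hρ)
  have hout (α : ι) : relEntropy (ptraceFst (P α ⊗ₖ 1 * ρ))
      (ptraceFst (P α ⊗ₖ 1 * ptraceSnd ρ ⊗ₖ 1)) =
      negMulLog (P α * ptraceSnd ρ).trace.re - entropy (ptraceFst (P α ⊗ₖ 1 * ρ)) := by
    rw [ptraceFst_kronecker_one_mul_kronecker_one (hP α) hρ₁,
      relEntropy_algebraMap (posSemidef_ptraceFst_kronecker_one_mul (hP α) hρ).1,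
      trace_ptraceFst_kronecker_one_mul, negMulLog]
    ring
  rw [relEntropy_ptraceSnd_kronecker_one hρ] at hmono
  simp only [hout, Finset.sum_sub_distrib] at hmono
  linarith

end Measurement

theorem classical_quantum_entropy_chain_general
    {n₁ n₂ ι κ : Type*} [Fintype n₁] [Fintype n₂] [DecidableEq n₁] [DecidableEq n₂]
    [Fintype ι] [Fintype κ] {ρ : Matrix (n₁ × n₂) (n₁ × n₂) ℂ} (hρ : ρ.PosSemidef)
    {P : ι → Matrix n₁ n₁ ℂ} (hP : ∀ α, (P α).PosSemidef) (hPsum : ∑ α, P α = 1)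
    {Q : κ → Matrix n₂ n₂ ℂ} (hQ : ∀ β, (Q β).PosSemidef) (hQsum : ∑ β, Q β = 1) :
    entropy ρ - entropy (ptraceSnd ρ) - entropy (ptraceFst ρ) ≤
      (∑ α, entropy (ptraceFst ((P α ⊗ₖ (1 : Matrix n₂ n₂ ℂ)) * ρ)))
        - (∑ α, Real.negMulLog (((P α * ptraceSnd ρ).trace).re))
        - entropy (ptraceFst ρ)
    ∧ (∑ α, entropy (ptraceFst ((P α ⊗ₖ (1 : Matrix n₂ n₂ ℂ)) * ρ)))
        - (∑ α, Real.negMulLog (((P α * ptraceSnd ρ).trace).re))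
        - entropy (ptraceFst ρ) ≤
      (∑ α, ∑ β, Real.negMulLog ((((P α ⊗ₖ Q β) * ρ).trace).re))
        - (∑ α, Real.negMulLog (((P α * ptraceSnd ρ).trace).re))
        - (∑ β, Real.negMulLog (((Q β * ptraceFst ρ).trace).re)) := by
  have hfst := entropy_sub_entropy_ptraceSnd_le hρ hP hPsum
  have hsnd := holevo_bound
    (fun α => posSemidef_ptraceFst_kronecker_one_mul (hP α) hρ) hQ hQsum
  simp only [sum_ptraceFst_kronecker_one_mul hPsum, trace_mul_ptraceFst_kronecker_one_mul] at hsnd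
  constructor <;> linarith

/-- **Interpolating classical-quantum entropy chain**:
`S[ρ₁₂] − S[ρ₁] − S[ρ₂] ≤ S^{cl,Q}[ρ₁₂] − S^cl[ρ₁] − S[ρ₂]
  ≤ S^cl[ρ₁₂] − S^cl[ρ₁] − S^cl[ρ₂]`. -/
theorem classical_quantum_entropy_chain
    {n₁ n₂ : Type*} [Fintype n₁] [Fintype n₂]
    [DecidableEq n₁] [DecidableEq n₂] {M N : ℕ}
    (ρ : Matrix (n₁ × n₂) (n₁ × n₂) ℂ)
    (hρ : ρ.PosSemidef) (hρtr : ρ.trace = 1)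
    (P : Fin M → Matrix n₁ n₁ ℂ) (hP : ∀ α, (P α).PosSemidef)
    (hPsum : ∑ α, P α = 1)
    (Q : Fin N → Matrix n₂ n₂ ℂ) (hQ : ∀ β, (Q β).PosSemidef)
    (hQsum : ∑ β, Q β = 1) :
    entropy ρ - entropy (ptraceSnd ρ) - entropy (ptraceFst ρ) ≤
      (∑ α, entropy (ptraceFst ((P α ⊗ₖ (1 : Matrix n₂ n₂ ℂ)) * ρ)))
        - (∑ α, Real.negMulLog (((P α * ptraceSnd ρ).trace).re))
        - entropy (ptraceFst ρ)
    ∧ (∑ α, entropy (ptraceFst ((P α ⊗ₖ (1 : Matrix n₂ n₂ ℂ)) * ρ)))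
        - (∑ α, Real.negMulLog (((P α * ptraceSnd ρ).trace).re))
        - entropy (ptraceFst ρ) ≤
      (∑ α, ∑ β, Real.negMulLog ((((P α ⊗ₖ Q β) * ρ).trace).re))
        - (∑ α, Real.negMulLog (((P α * ptraceSnd ρ).trace).re))
        - (∑ β, Real.negMulLog (((Q β * ptraceFst ρ).trace).re)) := by
  exact classical_quantum_entropy_chain_general hρ hP hPsum hQ hQsum
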